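/- For every complex s with Re(s) > 1, ∑'_{(m,k)} [ 1/(m² + 15k²)^s − 1/(3m² + 5k²)^s ] = 2·(1 + 2^{1−2s} + 2^{1−s})·L(χ_{-3}, s)·L(χ_5, s). -/

import Mathlib

/-- The quadratic Dirichlet character modulo 3:
`χ₋₃(n) = 1` if `n ≡ 1 (mod 3)`, `-1` if `n ≡ 2 (mod 3)`, `0` if `3 ∣ n`. -/
def chiNeg3 (n : ℕ) : ℤ :=
  if n % 3 = 1 then 1 else if n % 3 = 2 then -1 else 0

/-- The quadratic Dirichlet character modulo 5 given by the Legendre symbol `(n/5)`. -/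
def chi5 (n : ℕ) : ℤ :=
  if n % 5 = 1 ∨ n % 5 = 4 then 1 else if n % 5 = 2 ∨ n % 5 = 3 then -1 else 0

/-- The quadratic Dirichlet character modulo 15, `χ₋₁₅(n) = (n/3)·(n/5)`. -/
def chiNeg15 (n : ℕ) : ℤ := chiNeg3 n * chi5 n

/-- The Dirichlet `L`-series `L(χ, s) = ∑_{n ≥ 1} χ(n) n^{-s}`. -/
noncomputable def LSer (χ : ℕ → ℤ) (s : ℂ) : ℂ :=
  ∑' n : ℕ, (χ (n + 1) : ℂ) / ((n : ℂ) + 1) ^ s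


/-- Representations of `n` by the form `[a,b,c]`. -/
def RS (a b c n : ℤ) : Set (ℤ × ℤ) := {v | a * v.1 ^ 2 + b * v.1 * v.2 + c * v.2 ^ 2 = n}

/-- Number of representations of `n` by the form `[a,b,c]`. -/
noncomputable def RN (a b c n : ℤ) : ℕ := (RS a b c n).ncard

theorem RS_finite (a b c n : ℤ) (ha : 0 < a) (hD : b ^ 2 - 4 * a * c < 0) :
    (RS a b c n).Finite := by
  have hc : 0 < c := by
    by_contra h
    push Not at h
    nlinarith [sq_nonneg b, mul_nonneg ha.le (neg_nonneg.mpr h)]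
  refine Set.Finite.subset ((Set.finite_Icc (-(4 * c * |n|)) (4 * c * |n|)).prod
    (Set.finite_Icc (-(4 * a * |n|)) (4 * a * |n|))) ?_
  rintro ⟨x, y⟩ h
  simp only [RS, Set.mem_ofPred_eq] at h
  have hn := le_abs_self n
  have h1 : x ^ 2 ≤ 4 * c * |n| := by
    have : (2 * c * y + b * x) ^ 2 + (4 * a * c - b ^ 2) * x ^ 2 = 4 * c * n := by
      rw [← h]; ring
    nlinarith [sq_nonneg (2 * c * y + b * x), mul_nonneg (show 0 ≤ 4 * a * c - b ^ 2 - 1 by linarith) (sq_nonneg x),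
      mul_nonneg hc.le (sub_nonneg.mpr hn)]
  have h2 : y ^ 2 ≤ 4 * a * |n| := by
    have : (2 * a * x + b * y) ^ 2 + (4 * a * c - b ^ 2) * y ^ 2 = 4 * a * n := by
      rw [← h]; ring
    nlinarith [sq_nonneg (2 * a * x + b * y), mul_nonneg (show 0 ≤ 4 * a * c - b ^ 2 - 1 by linarith) (sq_nonneg y),
      mul_nonneg ha.le (sub_nonneg.mpr hn)]
  have key : ∀ z : ℤ, z ≤ z ^ 2 ∧ -z ≤ z ^ 2 := by
    intro z
    have := Int.le_self_sq z
    have := Int.le_self_sq (-z)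
    constructor
    · assumption
    · simpa using this
  have := key x
  have := key y
  simp only [Set.mem_prod, Set.mem_Icc]
  refine ⟨⟨?_, ?_⟩, ?_, ?_⟩ <;> linarith

theorem RN_swap (a b c n : ℤ) : RN a b c n = RN c b a n := by
  unfold RN
  rw [← Set.ncard_image_of_injective (RS c b a n) (Prod.swap_injective)]
  congr 1
  ext ⟨x, y⟩
  simp only [RS, Set.mem_image, Set.mem_ofPred_eq, Prod.exists, Prod.swap_prod_mk, Prod.mk.injEq]
  constructor
  · intro h
    exact ⟨y, x, by rw [← h]; ring, rfl, rfl⟩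
  · rintro ⟨u, v, h, rfl, rfl⟩
    rw [← h]; ring

theorem RN_neg (a b c n : ℤ) : RN a b c n = RN a (-b) c n := by
  unfold RN
  rw [← Set.ncard_image_of_injective (RS a (-b) c n) (f := fun v : ℤ × ℤ => (v.1, -v.2))
    (by rintro ⟨x, y⟩ ⟨u, v⟩ h; simpa using h)]
  congr 1
  ext ⟨x, y⟩
  simp only [RS, Set.mem_image, Set.mem_ofPred_eq, Prod.exists, Prod.mk.injEq]
  constructor
  · intro h
    exact ⟨x, -y, by rw [← h]; ring, rfl, by ring⟩
  · rintro ⟨u, v, h, rfl, rfl⟩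
    rw [← h]; ring

/-- Sublattice `x ≡ r y mod p`. -/
theorem RN_sub (A B C r p c n : ℤ) (hp : 0 < p) (hc : A * r ^ 2 + B * r + C = p * c) :
    (RS A B C (p * n) ∩ {v | p ∣ v.1 - r * v.2}).ncard = RN (A * p) (2 * A * r + B) c n := by
  unfold RN
  rw [← Set.ncard_image_of_injective (RS (A * p) (2 * A * r + B) c n)
    (f := fun v : ℤ × ℤ => (r * v.2 + p * v.1, v.2)) (by
      rintro ⟨x, y⟩ ⟨u, v⟩ h
      simp only [Prod.mk.injEq] at h ⊢
      obtain ⟨h, rfl⟩ := h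
      refine ⟨?_, rfl⟩
      have : p * x = p * u := by linarith
      exact mul_left_cancel₀ hp.ne' this)]
  congr 1
  ext ⟨x, y⟩
  simp only [RS, Set.mem_image, Set.mem_ofPred_eq, Prod.exists, Prod.mk.injEq, Set.mem_inter_iff]
  constructor
  · rintro ⟨h, t, ht⟩
    refine ⟨t, y, ?_, by linarith, rfl⟩
    apply mul_left_cancel₀ hp.ne'
    have hx : x = r * y + p * t := by linarith
    rw [← h, hx]
    linear_combination (-y ^ 2) * hc
  · rintro ⟨t, y, h, rfl, rfl⟩
    refine ⟨?_, t, by ring⟩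
    rw [← h]
    linear_combination (y ^ 2) * hc

theorem RN_shift (a b c k n : ℤ) :
    RN a b c n = RN a (2 * a * k + b) (a * k ^ 2 + b * k + c) n := by
  have := RN_sub a b c k 1 (a * k ^ 2 + b * k + c) n one_pos (by ring)
  simp only [mul_one, one_mul] at this
  rw [← this]
  unfold RN
  congr 1
  ext v
  simp

theorem reduction (N : ℕ) : ∀ a b c : ℤ, 0 < a → a ≤ N → b ^ 2 - 4 * a * c = -15 →
    (∀ n, RN a b c n = RN 1 1 4 n) ∨ (∀ n, RN a b c n = RN 2 1 2 n) := by
  induction N with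
  | zero => intro a b c h1 h2; exfalso; push_cast at h2; linarith
  | succ N ih =>
    intro a b c ha haN hD
    -- reduce b
    obtain ⟨k, hk1, hk2⟩ : ∃ k : ℤ, -a ≤ 2 * a * k + b ∧ 2 * a * k + b < a := by
      refine ⟨-((b + a) / (2 * a)), ?_, ?_⟩
      · have := Int.emod_nonneg (b + a) (show 2 * a ≠ 0 by linarith)
        have h := Int.emod_add_mul_ediv (b + a) (2 * a)
        linarith
      · have := Int.emod_lt_of_pos (b + a) (show 0 < 2 * a by linarith)
        have h := Int.emod_add_mul_ediv (b + a) (2 * a)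
        linarith
    have hs := RN_shift a b c k
    have hD' : (2 * a * k + b) ^ 2 - 4 * a * (a * k ^ 2 + b * k + c) = -15 := by
      rw [← hD]; ring
    generalize 2 * a * k + b = b' at *
    generalize a * k ^ 2 + b * k + c = c' at *
    by_cases hca : c' < a
    · have hc0 : 0 < c' := by
        by_contra h
        push Not at h
        nlinarith [sq_nonneg b', mul_nonneg ha.le (neg_nonneg.mpr h)]
      have := ih c' b' a hc0 (by push_cast at haN; linarith) (by rw [← hD']; ring)
      simp only [hs]
      rcases this with h | h
      · left; intro n; rw [RN_swap, h]
      · right; intro n; rw [RN_swap, h]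
    · push Not at hca
      have hbb : b' ^ 2 ≤ a ^ 2 := by
        apply sq_le_sq'
        · linarith
        · linarith
      have ha2 : a ≤ 2 := by nlinarith
      simp only [hs]
      have hb2 : -2 ≤ b' := by linarith
      have hb3 : b' ≤ 2 := by linarith
      interval_cases a
      · interval_cases b' <;> try omega
        left; intro n
        rw [RN_neg]
        have : c' = 4 := by omega
        rw [this]; norm_num
      · interval_cases b' <;> try omega
        · right; intro n
          rw [RN_neg]
          have : c' = 2 := by omega
          rw [this]; norm_num
        · right; intro n
          have : c' = 2 := by omega
          rw [this]

theorem genus1 (m : ℤ) (h : (RS 1 1 4 m).Nonempty) : m % 3 ≠ 2 := by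
  obtain ⟨⟨x, y⟩, h⟩ := h
  simp only [RS, Set.mem_ofPred_eq] at h
  have : m = (x - y) ^ 2 + 3 * (x * y + y ^ 2) := by rw [← h]; ring
  have h2 : (x - y) ^ 2 % 3 ≠ 2 := by
    have : (x - y) % 3 = 0 ∨ (x - y) % 3 = 1 ∨ (x - y) % 3 = 2 := by omega
    rcases this with h | h | h <;> simp [pow_two, Int.mul_emod, h]
  omega

theorem genus2 (m : ℤ) (h : (RS 2 1 2 m).Nonempty) : m % 3 ≠ 1 := by
  obtain ⟨⟨x, y⟩, h⟩ := h
  simp only [RS, Set.mem_ofPred_eq] at h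
  have : m = 2 * (x + y) ^ 2 + 3 * (-x * y) := by rw [← h]; ring
  have h2 : (x + y) ^ 2 % 3 ≠ 2 := by
    have : (x + y) % 3 = 0 ∨ (x + y) % 3 = 1 ∨ (x + y) % 3 = 2 := by omega
    rcases this with h | h | h <;> simp [pow_two, Int.mul_emod, h]
  omega

theorem RN_pos (a b c : ℤ) (ha : 0 < a) (hD : b ^ 2 - 4 * a * c = -15) : RN a b c a ≠ 0 := by
  unfold RN
  exact Set.ncard_ne_zero_of_mem (a := (1, 0)) (by simp [RS])
    (RS_finite a b c a ha (by linarith))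

theorem class1 (a b c : ℤ) (ha : 0 < a) (h3 : a % 3 = 1) (hD : b ^ 2 - 4 * a * c = -15) (n : ℤ) :
    RN a b c n = RN 1 1 4 n := by
  rcases reduction a.toNat a b c ha (by omega) hD with h | h
  · exact h n
  · exfalso
    have h1 := RN_pos a b c ha hD
    rw [h] at h1
    exact genus2 a (Set.nonempty_of_ncard_ne_zero h1) h3

theorem class2 (a b c : ℤ) (ha : 0 < a) (h3 : a % 3 = 2) (hD : b ^ 2 - 4 * a * c = -15) (n : ℤ) :
    RN a b c n = RN 2 1 2 n := by
  rcases reduction a.toNat a b c ha (by omega) hD with h | h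
  · exfalso
    have h1 := RN_pos a b c ha hD
    rw [h] at h1
    exact genus1 a (Set.nonempty_of_ncard_ne_zero h1) h3
  · exact h n

/-- representations divisible by `p` -/
theorem RN_mulp (A B C p n : ℤ) (hp : 0 < p) :
    (RS A B C (p * n) ∩ {v | p ∣ v.1 ∧ p ∣ v.2}).ncard
      = if p ∣ n then RN A B C (n / p) else 0 := by
  split_ifs with h
  · obtain ⟨m, rfl⟩ := h
    rw [Int.mul_ediv_cancel_left _ hp.ne']
    unfold RN
    rw [← Set.ncard_image_of_injective (RS A B C m) (f := fun v : ℤ × ℤ => (p * v.1, p * v.2))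
      (by
        rintro ⟨x, y⟩ ⟨u, v⟩ h
        simpa [hp.ne'] using h)]
    congr 1
    ext ⟨x, y⟩
    simp only [RS, Set.mem_image, Set.mem_ofPred_eq, Prod.exists, Prod.mk.injEq, Set.mem_inter_iff]
    constructor
    · rintro ⟨h, ⟨u, rfl⟩, ⟨v, rfl⟩⟩
      refine ⟨u, v, ?_, rfl, rfl⟩
      apply mul_left_cancel₀ hp.ne'
      apply mul_left_cancel₀ hp.ne'
      rw [← h]; ring
    · rintro ⟨u, v, h, rfl, rfl⟩
      refine ⟨?_, ⟨u, rfl⟩, ⟨v, rfl⟩⟩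
      rw [← h]; ring
  · convert Set.ncard_empty (ℤ × ℤ)
    rw [Set.eq_empty_iff_forall_notMem]
    rintro ⟨x, y⟩ ⟨h1, ⟨u, hu⟩, ⟨v, hv⟩⟩
    simp only [RS, Set.mem_ofPred_eq] at h1 hu hv
    subst hu hv
    apply h
    refine ⟨A * u ^ 2 + B * u * v + C * v ^ 2, ?_⟩
    apply mul_left_cancel₀ hp.ne'
    rw [← h1]; ring

theorem split_hecke (A B C r r' c c' p n : ℤ) (hA : 0 < A) (hD : B ^ 2 - 4 * A * C = -15)
    (hp : Prime p) (hp0 : 0 < p) (h15 : ¬ p ∣ 15) (hpA : ¬ p ∣ A)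
    (hr : A * r ^ 2 + B * r + C = p * c) (hr' : A * r' ^ 2 + B * r' + C = p * c')
    (hrr : p ∣ A * (r + r') + B) :
    RN A B C (p * n) + (if p ∣ n then RN A B C (n / p) else 0)
      = RN (A * p) (2 * A * r + B) c n + RN (A * p) (2 * A * r' + B) c' n := by
  rw [← RN_sub A B C r p c n hp0 hr, ← RN_sub A B C r' p c' n hp0 hr', ← RN_mulp A B C p n hp0]
  have hfin := RS_finite A B C (p * n) hA (by linarith)
  rw [← Set.ncard_union_add_ncard_inter _ _ (hfin.subset Set.inter_subset_left)
    (hfin.subset Set.inter_subset_left)]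
  congr 1
  · unfold RN
    congr 1
    ext ⟨x, y⟩
    simp only [RS, Set.mem_ofPred_eq, Set.mem_inter_iff, Set.mem_union]
    refine ⟨fun h => ?_, fun h => by rcases h with h | h <;> exact h.1⟩
    have hd : p ∣ A * ((x - r * y) * (x - r' * y)) := by
      obtain ⟨w, hw⟩ := hrr
      refine ⟨n - w * x * y - c * y ^ 2 + r * w * y ^ 2, ?_⟩
      linear_combination h - (x * y) * hw - y ^ 2 * hr + r * y ^ 2 * hw
    rcases hp.dvd_or_dvd hd with h1 | h1
    · exact absurd h1 hpA
    · rcases hp.dvd_or_dvd h1 with h2 | h2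
      · exact Or.inl ⟨h, h2⟩
      · exact Or.inr ⟨h, h2⟩
  · congr 1
    ext ⟨x, y⟩
    simp only [Set.mem_ofPred_eq, Set.mem_inter_iff]
    constructor
    · rintro ⟨h, hx, hy⟩
      exact ⟨⟨h, dvd_sub hx (hy.mul_left _)⟩, h, dvd_sub hx (hy.mul_left _)⟩
    · rintro ⟨⟨h, h1⟩, -, h2⟩
      have h3 : p ∣ (r - r') * y := by
        have e : (r - r') * y = (x - r' * y) - (x - r * y) := by ring
        rw [e]
        exact dvd_sub h2 h1
      have hy : p ∣ y := by
        rcases hp.dvd_or_dvd h3 with h4 | h4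
        · exfalso
          obtain ⟨w, hw⟩ := hrr
          obtain ⟨u, hu⟩ := h4
          apply h15
          refine ⟨4 * A * c - p * (w + A * u) ^ 2, ?_⟩
          have : 2 * A * r + B = p * (w + A * u) := by
            linear_combination hw + A * hu
          linear_combination (4 * A) * hr + hD - (2 * A * r + B + p * (w + A * u)) * this
        · exact h4
      refine ⟨h, ?_, hy⟩
      have := dvd_add h1 (hy.mul_left r)
      simpa using this

/-- no nontrivial root -/
theorem inert_hecke (A B C p n : ℤ) (hD : B ^ 2 - 4 * A * C = -15)
    (hp : Prime p) (hp0 : 0 < p) (hpA : ¬ p ∣ A)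
    (hns : ∀ z y : ℤ, p ∣ z ^ 2 + 15 * y ^ 2 → p ∣ y) :
    RN A B C (p * n) = (if p ∣ n then RN A B C (n / p) else 0) := by
  rw [← RN_mulp A B C p n hp0]
  unfold RN
  congr 1
  ext ⟨x, y⟩
  simp only [RS, Set.mem_ofPred_eq, Set.mem_inter_iff]
  refine ⟨fun h => ⟨h, ?_⟩, fun h => h.1⟩
  have hy : p ∣ y := by
    apply hns (2 * A * x + B * y) y
    refine ⟨4 * A * n, ?_⟩
    linear_combination 4 * A * h + y ^ 2 * hD
  refine ⟨?_, hy⟩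
  have : p ∣ A * x ^ 2 := by
    obtain ⟨w, rfl⟩ := hy
    refine ⟨n - B * x * w - C * p * w ^ 2, ?_⟩
    linear_combination h
  rcases hp.dvd_or_dvd this with h | h
  · exact absurd h hpA
  · exact hp.dvd_of_dvd_pow h

theorem ram_hecke (A B C r c p n : ℤ) (hp : Prime p) (hp0 : 0 < p) (hpA : ¬ p ∣ A)
    (hr : A * r ^ 2 + B * r + C = p * c) (hrr : p ∣ 2 * A * r + B) :
    RN A B C (p * n) = RN (A * p) (2 * A * r + B) c n := by
  rw [← RN_sub A B C r p c n hp0 hr]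
  unfold RN
  congr 1
  ext ⟨x, y⟩
  simp only [RS, Set.mem_ofPred_eq, Set.mem_inter_iff]
  refine ⟨fun h => ⟨h, ?_⟩, fun h => h.1⟩
  have hd : p ∣ A * (x - r * y) ^ 2 := by
    obtain ⟨w, hw⟩ := hrr
    refine ⟨n - w * x * y - c * y ^ 2 + r * w * y ^ 2, ?_⟩
    linear_combination h - (x * y) * hw - y ^ 2 * hr + r * y ^ 2 * hw
  rcases hp.dvd_or_dvd hd with h1 | h1
  · exact absurd h1 hpA
  · exact hp.dvd_of_dvd_pow h1

/-- The difference of representation numbers of the two classes of discriminant `-15`. -/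
noncomputable def GG (n : ℤ) : ℤ := RN 1 1 4 n - RN 2 1 2 n

theorem GG_three (n : ℤ) : GG (3 * n) = - GG n := by
  unfold GG
  have p3 : Prime (3 : ℤ) := Int.prime_three
  rw [ram_hecke 1 1 4 1 2 3 n p3 (by norm_num) (by norm_num) (by norm_num) (by norm_num),
    ram_hecke 2 1 2 (-1) 1 3 n p3 (by norm_num) (by norm_num) (by norm_num) (by norm_num),
    RN_swap (1 * 3), class2 2 _ _ (by norm_num) (by norm_num) (by norm_num), RN_swap (2 * 3),
    class1 1 (2 * 2 * -1 + 1) (2 * 3) (by norm_num) (by norm_num) (by norm_num)]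
  ring

theorem GG_five (n : ℤ) : GG (5 * n) = - GG n := by
  unfold GG
  have p5 : Prime (5 : ℤ) := by rw [Int.prime_iff_natAbs_prime]; norm_num
  rw [ram_hecke 1 1 4 2 2 5 n p5 (by norm_num) (by norm_num) (by norm_num) (by norm_num),
    ram_hecke 2 1 2 1 1 5 n p5 (by norm_num) (by norm_num) (by norm_num) (by norm_num),
    class2 (1 * 5) _ _ (by norm_num) (by norm_num) (by norm_num),
    class1 (2 * 5) _ _ (by norm_num) (by norm_num) (by norm_num)]
  ring

theorem GG_two (n : ℤ) : GG (2 * n) = - 2 * GG n - (if (2 : ℤ) ∣ n then GG (n / 2) else 0) := by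
  have p2 : Prime (2 : ℤ) := Int.prime_two
  have h1 := split_hecke 1 1 4 0 1 2 3 2 n (by norm_num) (by norm_num) p2 (by norm_num)
    (by norm_num) (by norm_num) (by norm_num) (by norm_num) (by norm_num)
  have h2 := split_hecke 3 3 2 0 1 1 4 2 n (by norm_num) (by norm_num) p2 (by norm_num)
    (by norm_num) (by norm_num) (by norm_num) (by norm_num) (by norm_num)
  have h3 : ∀ m, RN 3 3 2 m = RN 2 1 2 m := fun m => by
    rw [RN_swap, class2 _ _ _ (by norm_num) (by norm_num) (by norm_num)]
  rw [class2 (1 * 2) _ _ (by norm_num) (by norm_num) (by norm_num),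
    class2 (1 * 2) _ _ (by norm_num) (by norm_num) (by norm_num)] at h1
  rw [RN_swap (3 * 2), RN_swap (3 * 2), class1 1 _ _ (by norm_num) (by norm_num) (by norm_num),
    class1 4 _ _ (by norm_num) (by norm_num) (by norm_num), h3, h3] at h2
  unfold GG
  split_ifs at * <;> omega

theorem GG_inert (p n : ℤ) (hp : Prime p) (hp0 : 0 < p) (h2 : ¬ p ∣ 2)
    (hns : ∀ z y : ℤ, p ∣ z ^ 2 + 15 * y ^ 2 → p ∣ y) :
    GG (p * n) = (if p ∣ n then GG (n / p) else 0) := by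
  unfold GG
  rw [inert_hecke 1 1 4 p n (by norm_num) hp hp0 (fun h => hp.not_dvd_one h) hns,
    inert_hecke 2 1 2 p n (by norm_num) hp hp0 h2 hns]
  split_ifs <;> simp

theorem GG_split (p n z : ℤ) (hp : Prime p) (hp0 : 0 < p) (h2 : ¬ p ∣ 2) (h15 : ¬ p ∣ 15)
    (hz : p ∣ z ^ 2 + 15) :
    GG (p * n) = (if p % 3 = 1 then 2 else -2) * GG n - (if p ∣ n then GG (n / p) else 0) := by
  have hp3 : p % 3 ≠ 0 := by
    intro h
    have h3 : (3 : ℤ) ∣ p := Int.dvd_of_emod_eq_zero h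
    have := (Int.prime_three.dvd_prime_iff_associated hp).1 h3
    exact h15 (this.symm.dvd.trans (by norm_num))
  have hodd : p % 2 = 1 := by
    by_contra h
    have h3 : (2 : ℤ) ∣ p := by omega
    have := (Int.prime_two.dvd_prime_iff_associated hp).1 h3
    exact h2 this.symm.dvd
  -- a root of `4 r ≡ z - 1`-type congruences
  obtain ⟨q, hq⟩ : ∃ q : ℤ, 2 * q = p + 1 := ⟨(p + 1) / 2, by omega⟩
  have root : ∀ A C r : ℤ, 1 - 4 * A * C = -15 → ¬ p ∣ A → (p ∣ (2 * A * r + 1) ^ 2 + 15) →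
      ∃ c, A * r ^ 2 + 1 * r + C = p * c := by
    intro A C r hD hA h
    have h1 : p ∣ 2 * (2 * (A * (A * r ^ 2 + 1 * r + C))) := by
      convert h using 1
      linear_combination -hD
    rcases hp.dvd_or_dvd h1 with h1 | h1
    · exact absurd h1 h2
    rcases hp.dvd_or_dvd h1 with h1 | h1
    · exact absurd h1 h2
    rcases hp.dvd_or_dvd h1 with h1 | h1
    · exact absurd h1 hA
    exact h1
  have key : ∀ z : ℤ, p ∣ z ^ 2 + 15 → ∀ u v : ℤ, u = z + p * v → p ∣ u ^ 2 + 15 := by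
    rintro z ⟨w, hw⟩ u v rfl
    exact ⟨w + 2 * z * v + p * v ^ 2, by linear_combination hw⟩
  have hz' : p ∣ (-z) ^ 2 + 15 := by simpa using hz
  obtain ⟨c1, hc1⟩ := root 1 4 (q * (z - 1)) (by norm_num) (fun h => hp.not_dvd_one h)
    (key z hz _ (z - 1) (by linear_combination (z - 1) * hq))
  obtain ⟨c2, hc2⟩ := root 1 4 (q * (-z - 1)) (by norm_num) (fun h => hp.not_dvd_one h)
    (key (-z) hz' _ (-z - 1) (by linear_combination (-z - 1) * hq))
  obtain ⟨c3, hc3⟩ := root 2 2 (q ^ 2 * (z - 1)) (by norm_num) h2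
    (key z hz _ ((z - 1) * (p + 2)) (by linear_combination (z - 1) * (2 * q + p + 1) * hq))
  obtain ⟨c4, hc4⟩ := root 2 2 (q ^ 2 * (-z - 1)) (by norm_num) h2
    (key (-z) hz' _ ((-z - 1) * (p + 2)) (by linear_combination (-z - 1) * (2 * q + p + 1) * hq))
  have e1 := split_hecke 1 1 4 _ _ c1 c2 p n (by norm_num) (by norm_num) hp hp0 h15
    (fun h => hp.not_dvd_one h) hc1 hc2 ⟨-1, by linear_combination -hq⟩
  have e2 := split_hecke 2 1 2 _ _ c3 c4 p n (by norm_num) (by norm_num) hp hp0 h15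
    h2 hc3 hc4 ⟨-(p + 2), by linear_combination -(2 * q + p + 1) * hq⟩
  have d1 : (2 * 1 * (q * (z - 1)) + 1) ^ 2 - 4 * (1 * p) * c1 = -15 := by
    linear_combination 4 * hc1
  have d2 : (2 * 1 * (q * (-z - 1)) + 1) ^ 2 - 4 * (1 * p) * c2 = -15 := by
    linear_combination 4 * hc2
  have d3 : (2 * 2 * (q ^ 2 * (z - 1)) + 1) ^ 2 - 4 * (2 * p) * c3 = -15 := by
    linear_combination 8 * hc3
  have d4 : (2 * 2 * (q ^ 2 * (-z - 1)) + 1) ^ 2 - 4 * (2 * p) * c4 = -15 := by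
    linear_combination 8 * hc4
  unfold GG
  by_cases h3 : p % 3 = 1
  · rw [class1 _ _ _ (by omega) (by omega) d1, class1 _ _ _ (by omega) (by omega) d2] at e1
    rw [class2 _ _ _ (by omega) (by omega) d3, class2 _ _ _ (by omega) (by omega) d4] at e2
    rw [if_pos h3]
    split_ifs at * <;> omega
  · rw [class2 _ _ _ (by omega) (by omega) d1, class2 _ _ _ (by omega) (by omega) d2] at e1
    rw [class1 _ _ _ (by omega) (by omega) d3, class1 _ _ _ (by omega) (by omega) d4] at e2
    rw [if_neg h3]
    split_ifs at * <;> omega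

theorem chi_jacobi (p : ℕ) (hp : p % 2 = 1) : jacobiSym (-15) p = chiNeg3 p * chi5 p := by
  rw [jacobiSym.mod_right (-15) (Nat.odd_iff.2 hp)]
  have h1 : (4 * (-15 : ℤ).natAbs) = 60 := by norm_num
  rw [h1]
  have h3 : p % 3 = (p % 60) % 3 := by omega
  have h5 : p % 5 = (p % 60) % 5 := by omega
  have h2 : (p % 60) % 2 = 1 := by omega
  have hlt : p % 60 < 60 := Nat.mod_lt _ (by norm_num)
  unfold chiNeg3 chi5
  rw [h3, h5]
  generalize p % 60 = q at *
  interval_cases q <;> first | omega | norm_num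

theorem GG_hecke (p : ℕ) (hp : p.Prime) (n : ℤ) :
    GG (p * n) = (chiNeg3 p + chi5 p) * GG n
      - chiNeg3 p * chi5 p * (if (p : ℤ) ∣ n then GG (n / p) else 0) := by
  have hpz : Prime (p : ℤ) := Nat.prime_iff_prime_int.1 hp
  have hp0 : (0 : ℤ) < p := by exact_mod_cast hp.pos
  by_cases e2 : p = 2
  · subst e2
    have := GG_two n
    simp [chiNeg3, chi5] at this ⊢
    exact this
  by_cases e3 : p = 3
  · subst e3
    have := GG_three n
    simp [chiNeg3, chi5] at this ⊢
    exact this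
  by_cases e5 : p = 5
  · subst e5
    have := GG_five n
    simp [chiNeg3, chi5] at this ⊢
    exact this
  have nd : ∀ q : ℕ, q.Prime → p ≠ q → ¬ p ∣ q := fun q hq hne h =>
    hne ((Nat.prime_dvd_prime_iff_eq hp hq).1 h)
  have nd' : ∀ q : ℕ, q.Prime → p ≠ q → ¬ q ∣ p := fun q hq hne h =>
    hne ((Nat.prime_dvd_prime_iff_eq hq hp).1 h).symm
  have h2 : ¬ (p : ℤ) ∣ 2 := by exact_mod_cast nd 2 (by norm_num) e2
  have h15 : ¬ (p : ℤ) ∣ 15 := by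
    intro h
    have h : p ∣ 3 * 5 := by exact_mod_cast h
    rcases hp.dvd_mul.1 h with h | h
    · exact nd 3 (by norm_num) e3 h
    · exact nd 5 (by norm_num) e5 h
  have m2 := nd' 2 (by norm_num) e2
  have m3 := nd' 3 (by norm_num) e3
  have m5 := nd' 5 (by norm_num) e5
  have hodd : p % 2 = 1 := by omega
  have : Fact p.Prime := ⟨hp⟩
  have hj := chi_jacobi p hodd
  rw [← jacobiSym.legendreSym.to_jacobiSym] at hj
  have c3 : chiNeg3 p = if (p : ℤ) % 3 = 1 then 1 else -1 := by
    unfold chiNeg3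
    split_ifs <;> omega
  have c5 : chi5 p = 1 ∨ chi5 p = -1 := by
    unfold chi5
    split_ifs <;> simp <;> omega
  have c3' : chiNeg3 p = 1 ∨ chiNeg3 p = -1 := by
    rw [c3]; split_ifs <;> simp
  have hcase : chi5 p = chiNeg3 p ∨ chi5 p = - chiNeg3 p := by
    rcases c5 with h | h <;> rcases c3' with h' | h' <;> simp [h, h']
  have hsq : chiNeg3 p * chiNeg3 p = 1 := by rcases c3' with h' | h' <;> simp [h']
  have hne : ((-15 : ℤ) : ZMod p) ≠ 0 := by
    intro h
    rw [ZMod.intCast_zmod_eq_zero_iff_dvd] at h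
    exact h15 (by simpa using h)
  rcases hcase with h | h
  · rw [h, hsq, legendreSym.eq_one_iff p hne] at hj
    obtain ⟨z, hz⟩ := hj
    have hz' : (p : ℤ) ∣ (z.val : ℤ) ^ 2 + 15 := by
      rw [← ZMod.intCast_zmod_eq_zero_iff_dvd]
      push_cast
      rw [ZMod.natCast_zmod_val]
      push_cast at hz
      linear_combination -hz
    rw [GG_split p n z.val hpz hp0 h2 h15 hz', h, hsq, c3]
    split_ifs <;> ring
  · rw [h, mul_neg, hsq, legendreSym.eq_neg_one_iff p] at hj
    rw [GG_inert p n hpz hp0 h2, h, mul_neg, hsq]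
    · ring
    · intro z y hzy
      by_contra hy
      apply hj
      rw [← ZMod.intCast_zmod_eq_zero_iff_dvd] at hzy hy
      push_cast at hzy
      refine ⟨(z : ZMod p) / y, ?_⟩
      field_simp
      push_cast
      linear_combination -hzy

/-- coefficient of the product of the two `L`-series -/
def acoef (n : ℕ) : ℤ := ∑ d ∈ n.divisors, chiNeg3 d * chi5 (n / d)

theorem chi3_mul (m n : ℕ) : chiNeg3 (m * n) = chiNeg3 m * chiNeg3 n := by
  unfold chiNeg3
  rw [Nat.mul_mod]
  have h1 : m % 3 < 3 := Nat.mod_lt _ (by norm_num)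
  have h2 : n % 3 < 3 := Nat.mod_lt _ (by norm_num)
  generalize m % 3 = a at *
  generalize n % 3 = b at *
  interval_cases a <;> interval_cases b <;> simp

theorem chi5_mul (m n : ℕ) : chi5 (m * n) = chi5 m * chi5 n := by
  unfold chi5
  rw [Nat.mul_mod]
  have h1 : m % 5 < 5 := Nat.mod_lt _ (by norm_num)
  have h2 : n % 5 < 5 := Nat.mod_lt _ (by norm_num)
  generalize m % 5 = a at *
  generalize n % 5 = b at *
  interval_cases a <;> interval_cases b <;> simp

theorem sum_div_p (p m : ℕ) (hp : p.Prime) (hm : m ≠ 0) :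
    ∑ d ∈ (p * m).divisors with p ∣ d, chiNeg3 d * chi5 (p * m / d) = chiNeg3 p * acoef m := by
  have : (p * m).divisors.filter (p ∣ ·) = m.divisors.image (p * ·) := by
    ext d
    simp only [Finset.mem_filter, Nat.mem_divisors, Finset.mem_image]
    constructor
    · rintro ⟨⟨h1, h2⟩, ⟨e, rfl⟩⟩
      exact ⟨e, ⟨Nat.dvd_of_mul_dvd_mul_left hp.pos h1, hm⟩, rfl⟩
    · rintro ⟨e, ⟨h1, h2⟩, rfl⟩
      exact ⟨⟨Nat.mul_dvd_mul_left p h1, mul_ne_zero hp.ne_zero hm⟩, e, rfl⟩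
  rw [this, Finset.sum_image (fun a _ b _ h => Nat.eq_of_mul_eq_mul_left hp.pos h), acoef,
    Finset.mul_sum]
  refine Finset.sum_congr rfl fun d _ => ?_
  rw [Nat.mul_div_mul_left _ _ hp.pos, chi3_mul]
  ring

theorem acoef_hecke (p n : ℕ) (hp : p.Prime) (hn : n ≠ 0) :
    acoef (p * n) = (chiNeg3 p + chi5 p) * acoef n
      - chiNeg3 p * chi5 p * (if p ∣ n then acoef (n / p) else 0) := by
  have h1 : acoef (p * n) = chiNeg3 p * acoef n +
      ∑ d ∈ (p * n).divisors with ¬ p ∣ d, chiNeg3 d * chi5 (p * n / d) := by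
    rw [← sum_div_p p n hp hn, acoef, Finset.sum_filter_add_sum_filter_not]
  have h2 : ∑ d ∈ (p * n).divisors with ¬ p ∣ d, chiNeg3 d * chi5 (p * n / d)
      = chi5 p * ∑ d ∈ n.divisors with ¬ p ∣ d, chiNeg3 d * chi5 (n / d) := by
    rw [Finset.mul_sum]
    have : (p * n).divisors.filter (¬ p ∣ ·) = n.divisors.filter (¬ p ∣ ·) := by
      ext d
      simp only [Finset.mem_filter, Nat.mem_divisors]
      constructor
      · rintro ⟨⟨h1, h2⟩, h3⟩
        exact ⟨⟨(Nat.Coprime.dvd_of_dvd_mul_left ((Nat.Prime.coprime_iff_not_dvd hp).2 h3).symm h1), hn⟩, h3⟩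
      · rintro ⟨⟨h1, h2⟩, h3⟩
        exact ⟨⟨h1.mul_left p, mul_ne_zero hp.ne_zero hn⟩, h3⟩
    rw [this]
    refine Finset.sum_congr rfl fun d hd => ?_
    simp only [Finset.mem_filter, Nat.mem_divisors] at hd
    rw [Nat.mul_div_assoc _ hd.1.1, chi5_mul]
    ring
  have h3 : acoef n = ∑ d ∈ n.divisors with p ∣ d, chiNeg3 d * chi5 (n / d) +
      ∑ d ∈ n.divisors with ¬ p ∣ d, chiNeg3 d * chi5 (n / d) := by
    rw [acoef, Finset.sum_filter_add_sum_filter_not]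
  have h4 : ∑ d ∈ n.divisors with p ∣ d, chiNeg3 d * chi5 (n / d)
      = chiNeg3 p * (if p ∣ n then acoef (n / p) else 0) := by
    split_ifs with h
    · obtain ⟨m, rfl⟩ := h
      rw [Nat.mul_div_cancel_left _ hp.pos, sum_div_p p m hp (by rintro rfl; simp at hn)]
    · rw [mul_zero]
      apply Finset.sum_eq_zero
      intro d hd
      simp only [Finset.mem_filter, Nat.mem_divisors] at hd
      exact absurd (hd.2.trans hd.1.1) h
  rw [h1, h2]
  linear_combination (-chi5 p) * h3 - chi5 p * h4

theorem GG_one : GG 1 = 2 := by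
  have h1 : RS 1 1 4 1 = {(1, 0), (-1, 0)} := by
    ext ⟨x, y⟩
    simp only [RS, Set.mem_ofPred_eq, Set.mem_insert_iff, Set.mem_singleton_iff, Prod.mk.injEq]
    constructor
    · intro h
      have hy : y = 0 := by
        have : (2 * x + y) ^ 2 + 15 * y ^ 2 = 4 := by linear_combination 4 * h
        by_contra h0
        have := Int.one_le_abs h0
        have : 1 ≤ y ^ 2 := by rw [← sq_abs]; nlinarith
        nlinarith [sq_nonneg (2 * x + y)]
      subst hy
      have : (x - 1) * (x + 1) = 0 := by linear_combination h
      rcases mul_eq_zero.1 this with h | h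
      · left; omega
      · right; omega
    · rintro (⟨rfl, rfl⟩ | ⟨rfl, rfl⟩) <;> norm_num
  have h2 : RS 2 1 2 1 = ∅ := by
    rw [Set.eq_empty_iff_forall_notMem]
    intro v hv
    exact genus2 1 ⟨v, hv⟩ (by norm_num)
  rw [GG, RN, RN, h1, h2, Set.ncard_empty, Set.ncard_pair (by simp)]
  norm_num

theorem GG_eq (n : ℕ) (hn : n ≠ 0) : GG n = 2 * acoef n := by
  induction n using Nat.strong_induction_on with
  | _ n ih =>
    by_cases h1 : n = 1
    · subst h1
      rw [Nat.cast_one, GG_one]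
      simp [acoef, chiNeg3, chi5]
    · obtain ⟨p, hp, m, rfl⟩ := Nat.exists_prime_and_dvd h1
      have hm : m ≠ 0 := by rintro rfl; simp at hn
      have hlt : m < p * m := by
        have := hp.two_le
        have := Nat.pos_of_ne_zero hm
        nlinarith
      rw [acoef_hecke p m hp hm]
      push_cast
      rw [GG_hecke p hp, ih m hlt hm]
      by_cases h : p ∣ m
      · rw [if_pos h, if_pos (by exact_mod_cast h)]
        obtain ⟨k, rfl⟩ := h
        have hk : k ≠ 0 := by rintro rfl; simp at hm
        have := ih k (by have := hp.two_le
                         have := Nat.pos_of_ne_zero hk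
                         nlinarith) hk
        rw [Nat.mul_div_cancel_left _ hp.pos]
        push_cast
        rw [Int.mul_ediv_cancel_left _ (by exact_mod_cast hp.ne_zero), this]
        ring
      · rw [if_neg h, if_neg (by exact_mod_cast h)]
        ring

/-- The difference of representation numbers in the statement. -/
noncomputable def FF (n : ℤ) : ℤ := RN 1 0 15 n - RN 3 0 5 n

theorem RN_scale2 (a b c n : ℤ) : RN (2 * a) (2 * b) (2 * c) (2 * n) = RN a b c n := by
  unfold RN
  congr 1
  ext ⟨x, y⟩
  simp only [RS, Set.mem_ofPred_eq]
  constructor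
  · intro h; linarith
  · intro h; linarith

theorem RN_scale2_odd (a b c n : ℤ) (hn : n % 2 = 1) : RN (2 * a) (2 * b) (2 * c) n = 0 := by
  unfold RN
  convert Set.ncard_empty (ℤ × ℤ)
  rw [Set.eq_empty_iff_forall_notMem]
  rintro ⟨x, y⟩ h
  simp only [RS, Set.mem_ofPred_eq] at h
  have : n = 2 * (a * x ^ 2 + b * x * y + c * y ^ 2) := by rw [← h]; ring
  omega

theorem two_one (n : ℤ) : RN 1 0 15 (2 * n) = RN (2 * 1) (2 * 1) (2 * 4) n := by
  rw [ram_hecke 1 0 15 1 8 2 n Int.prime_two (by norm_num) (by norm_num) (by norm_num)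
    (by norm_num)]
  norm_num

theorem two_three (n : ℤ) : RN 3 0 5 (2 * n) = RN (2 * 3) (2 * 3) (2 * 2) n := by
  rw [ram_hecke 3 0 5 1 4 2 n Int.prime_two (by norm_num) (by norm_num) (by norm_num)
    (by norm_num)]
  norm_num

theorem FF_four (n : ℤ) : FF (4 * n) = GG n := by
  have h : 4 * n = 2 * (2 * n) := by ring
  rw [FF, GG, h, two_one, two_three, RN_scale2, RN_scale2, RN_swap 3,
    class2 2 3 3 (by norm_num) (by norm_num) (by norm_num)]

theorem FF_two (n : ℤ) (hn : n % 2 = 1) : FF (2 * n) = 0 := by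
  rw [FF, two_one, two_three, RN_scale2_odd _ _ _ _ hn, RN_scale2_odd _ _ _ _ hn]
  norm_num

theorem FF_odd (n : ℤ) (hn : n % 2 = 1) : FF n = GG n := by
  have h1 : RN 1 0 15 n = RN 1 1 4 n := by
    unfold RN
    rw [← Set.ncard_image_of_injective (RS 1 0 15 n) (f := fun v : ℤ × ℤ => (v.1 - v.2, 2 * v.2))
      (by
        rintro ⟨x, y⟩ ⟨u, v⟩ h
        simp only [Prod.mk.injEq] at h ⊢
        omega)]
    congr 1
    ext ⟨x, y⟩
    simp only [RS, Set.mem_image, Set.mem_ofPred_eq, Prod.exists, Prod.mk.injEq]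
    constructor
    · rintro ⟨u, v, h, rfl, rfl⟩
      rw [← h]; ring
    · intro h
      have hy : y % 2 = 0 := by
        by_contra hy
        have hy : y % 2 = 1 := by omega
        have h2 : n = x * (x + y) + 2 * (2 * y ^ 2) := by rw [← h]; ring
        have h3 : (x * (x + y)) % 2 = 0 := by
          rcases Int.emod_two_eq_zero_or_one x with hx | hx
          · simp [Int.mul_emod, hx]
          · have : (x + y) % 2 = 0 := by omega
            simp [Int.mul_emod, this]
        omega
      obtain ⟨z, rfl⟩ := Int.dvd_of_emod_eq_zero hy
      exact ⟨x + z, z, by rw [← h]; ring, by ring, rfl⟩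
  have h2 : RN 3 0 5 n = RN 2 1 2 n := by
    unfold RN
    rw [← Set.ncard_image_of_injective (RS 3 0 5 n) (f := fun v : ℤ × ℤ => (v.2 + v.1, v.2 - v.1))
      (by
        rintro ⟨x, y⟩ ⟨u, v⟩ h
        simp only [Prod.mk.injEq] at h ⊢
        omega)]
    congr 1
    ext ⟨x, y⟩
    simp only [RS, Set.mem_image, Set.mem_ofPred_eq, Prod.exists, Prod.mk.injEq]
    constructor
    · rintro ⟨u, v, h, rfl, rfl⟩
      rw [← h]; ring
    · intro h
      have hy : (x - y) % 2 = 0 := by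
        have h2 : n = x * y + 2 * (x ^ 2 + y ^ 2) := by rw [← h]; ring
        rcases Int.emod_two_eq_zero_or_one x with hx | hx
        · have : (x * y) % 2 = 0 := by simp [Int.mul_emod, hx]
          omega
        · rcases Int.emod_two_eq_zero_or_one y with hy | hy
          · have : (x * y) % 2 = 0 := by simp [Int.mul_emod, hy]
            omega
          · omega
      obtain ⟨z, hz⟩ := Int.dvd_of_emod_eq_zero hy
      obtain rfl : x = y + 2 * z := by linarith
      exact ⟨z, y + z, by rw [← h]; ring, by ring, by ring⟩
  rw [FF, GG, h1, h2]

theorem FF_eq (n : ℕ) (hn : n ≠ 0) : FF n = 2 * (acoef n +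
    2 * (if 2 ∣ n then acoef (n / 2) else 0) + 2 * (if 4 ∣ n then acoef (n / 4) else 0)) := by
  have a2 : ∀ m : ℕ, m ≠ 0 → acoef (2 * m) = -2 * acoef m - (if 2 ∣ m then acoef (m / 2) else 0) := by
    intro m hm
    rw [acoef_hecke 2 m Nat.prime_two hm]
    simp [chiNeg3, chi5]
  by_cases h2 : 2 ∣ n
  · obtain ⟨m, rfl⟩ := h2
    have hm : m ≠ 0 := by omega
    by_cases h4 : 2 ∣ m
    · obtain ⟨k, rfl⟩ := h4
      have hk : k ≠ 0 := by omega
      have e : ((2 * (2 * k) : ℕ) : ℤ) = 4 * (k : ℤ) := by push_cast; ring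
      rw [e, FF_four, GG_eq k hk, a2 _ hm, if_pos (by omega), if_pos (by omega), if_pos (by omega)]
      have e1 : 2 * k / 2 = k := by omega
      have e2 : 2 * (2 * k) / 2 = 2 * k := by omega
      have e3 : 2 * (2 * k) / 4 = k := by omega
      rw [e1, e2, e3]
      ring
    · have e : ((2 * m : ℕ) : ℤ) = 2 * (m : ℤ) := by push_cast; ring
      rw [e, FF_two _ (by omega), a2 _ hm, if_neg h4, if_pos (by omega), if_neg (by omega)]
      have e1 : 2 * m / 2 = m := by omega
      rw [e1]
      ring
  · rw [FF_odd _ (by omega), GG_eq n hn, if_neg h2, if_neg (by omega)]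
    ring

theorem form_pos (a c : ℕ) (ha : 1 ≤ a) (hc : 1 ≤ c) (s : ℂ) (hs : 1 < s.re) :
    Summable (fun v : ℤ × ℤ => 1 / (((a : ℂ) * (v.1 : ℂ) ^ 2 + c * (v.2 : ℂ) ^ 2) ^ s)) := by
  have h0 := EisensteinSeries.summable_one_div_norm_rpow (k := 2 * s.re) (by linarith)
  rw [← (finTwoArrowEquiv ℤ).symm.summable_iff] at h0
  refine Summable.of_norm_bounded h0 ?_
  rintro ⟨x, y⟩
  simp only [Function.comp_apply, finTwoArrowEquiv_symm_apply]
  have ha' : (1 : ℝ) ≤ a := by exact_mod_cast ha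
  have hc' : (1 : ℝ) ≤ c := by exact_mod_cast hc
  set N : ℝ := ‖(![x, y] : Fin 2 → ℤ)‖ with hN
  have hN0 : 0 ≤ N := norm_nonneg _
  have hle : N ^ 2 ≤ a * (x : ℝ) ^ 2 + c * (y : ℝ) ^ 2 := by
    have : N ≤ √(a * (x : ℝ) ^ 2 + c * (y : ℝ) ^ 2) := by
      rw [hN, pi_norm_le_iff_of_nonneg (Real.sqrt_nonneg _)]
      intro i
      fin_cases i
      · simp only [Fin.zero_eta, Matrix.cons_val_zero, Int.norm_eq_abs]
        apply Real.le_sqrt_of_sq_le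
        rw [sq_abs]
        nlinarith [sq_nonneg (x : ℝ), sq_nonneg (y : ℝ)]
      · simp only [Fin.mk_one, Matrix.cons_val_one, Int.norm_eq_abs]
        apply Real.le_sqrt_of_sq_le
        simp only [Matrix.cons_val_fin_one, sq_abs]
        nlinarith [sq_nonneg (x : ℝ), sq_nonneg (y : ℝ)]
    calc N ^ 2 ≤ √(a * (x : ℝ) ^ 2 + c * (y : ℝ) ^ 2) ^ 2 := by gcongr
      _ = _ := Real.sq_sqrt (by positivity)
  have hs0 : s ≠ 0 := by rintro rfl; simp at hs; linarith
  rcases hN0.eq_or_lt with hz | hz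
  · have hv : (![x, y] : Fin 2 → ℤ) = 0 := norm_eq_zero.1 hz.symm
    have hx : x = 0 := by simpa using congrFun hv 0
    have hy : y = 0 := by simpa using congrFun hv 1
    subst hx hy
    simp only [Int.cast_zero]
    rw [show ((a : ℂ) * 0 ^ 2 + c * 0 ^ 2) = 0 by ring, Complex.zero_cpow hs0]
    simp only [div_zero, norm_zero]
    positivity
  · have hpos : 0 < a * (x : ℝ) ^ 2 + c * (y : ℝ) ^ 2 := lt_of_lt_of_le (by positivity) hle
    have e : ((a : ℂ) * (x : ℂ) ^ 2 + c * (y : ℂ) ^ 2)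
        = ((a * (x : ℝ) ^ 2 + c * (y : ℝ) ^ 2 : ℝ) : ℂ) := by push_cast; ring
    rw [e, norm_div, norm_one, Complex.norm_cpow_eq_rpow_re_of_pos hpos, Real.rpow_neg hN0,
      Real.rpow_mul hN0, one_div]
    have : N ^ (2 : ℝ) = N ^ 2 := by norm_cast
    rw [this]
    gcongr

theorem form_hasSum (a c : ℕ) (ha : 1 ≤ a) (hc : 1 ≤ c) (s : ℂ) (hs : 1 < s.re) :
    LSeriesHasSum (fun n : ℕ => (RN a 0 c n : ℂ)) s
      (∑' v : ℤ × ℤ, 1 / (((a : ℂ) * (v.1 : ℂ) ^ 2 + c * (v.2 : ℂ) ^ 2) ^ s)) := by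
  have hsum := (form_pos a c ha hc s hs).hasSum
  have hs0 : s ≠ 0 := by rintro rfl; simp at hs; linarith
  have h := hsum.tsum_fiberwise (fun v : ℤ × ℤ => ((a : ℤ) * v.1 ^ 2 + c * v.2 ^ 2).toNat)
  unfold LSeriesHasSum
  refine h.congr_fun fun n => ?_
  have hfib : (fun v : ℤ × ℤ => ((a : ℤ) * v.1 ^ 2 + c * v.2 ^ 2).toNat) ⁻¹' {n}
      = RS a 0 c n := by
    ext ⟨x, y⟩
    simp only [RS, Set.mem_preimage, Set.mem_singleton_iff, Set.mem_ofPred_eq]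
    have : 0 ≤ (a : ℤ) * x ^ 2 + c * y ^ 2 := by positivity
    have e : (a : ℤ) * x ^ 2 + 0 * x * y + c * y ^ 2 = (a : ℤ) * x ^ 2 + c * y ^ 2 := by ring
    rw [e]
    omega
  rw [hfib]
  have hconst : ∀ v : RS a 0 c n, 1 / (((a : ℂ) * (v.1.1 : ℂ) ^ 2 + c * (v.1.2 : ℂ) ^ 2) ^ s)
      = 1 / ((n : ℂ) ^ s) := by
    rintro ⟨⟨x, y⟩, hv⟩
    simp only [RS, Set.mem_ofPred_eq] at hv
    have : ((a : ℂ) * (x : ℂ) ^ 2 + c * (y : ℂ) ^ 2) = (n : ℂ) := by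
      have h2 : (((a : ℤ) * x ^ 2 + 0 * x * y + c * y ^ 2 : ℤ) : ℂ) = ((n : ℤ) : ℂ) := by rw [hv]
      push_cast at h2
      rw [← h2]; ring
    simp only [this]
  rw [tsum_congr hconst, tsum_const]
  rcases eq_or_ne n 0 with rfl | hn
  · simp [Complex.zero_cpow hs0]
  · rw [LSeries.term_of_ne_zero hn, nsmul_eq_mul, RN, Nat.card_coe_set_eq]
    ring

theorem form_subtype (a c : ℕ) (s : ℂ) (hs : 1 < s.re) :
    (∑' v : {v : ℤ × ℤ // v ≠ 0}, 1 / (((a : ℂ) * (v.1.1 : ℂ) ^ 2 + c * (v.1.2 : ℂ) ^ 2) ^ s))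
     = ∑' v : ℤ × ℤ, 1 / (((a : ℂ) * (v.1 : ℂ) ^ 2 + c * (v.2 : ℂ) ^ 2) ^ s) := by
  have hs0 : s ≠ 0 := by rintro rfl; simp at hs; linarith
  apply tsum_subtype_eq_of_support_subset (s := {v : ℤ × ℤ | v ≠ 0})
    (f := fun v : ℤ × ℤ => 1 / (((a : ℂ) * (v.1 : ℂ) ^ 2 + c * (v.2 : ℂ) ^ 2) ^ s))
  intro v hv hv0
  apply hv
  subst hv0
  simp [Complex.zero_cpow hs0]

theorem shift_hasSum (k : ℕ) (hk : k ≠ 0) (f : ℕ → ℂ) (s v : ℂ) (h : LSeriesHasSum f s v) :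
    LSeriesHasSum (fun n => if k ∣ n then f (n / k) else 0) s ((k : ℂ) ^ (-s) * v) := by
  unfold LSeriesHasSum at *
  have hinj : Function.Injective (fun n : ℕ => k * n) := fun a b hab =>
    Nat.eq_of_mul_eq_mul_left (Nat.pos_of_ne_zero hk) hab
  rw [← hinj.hasSum_iff]
  · refine (h.mul_left ((k : ℂ) ^ (-s))).congr_fun fun n => ?_
    simp only [Function.comp_apply]
    rcases eq_or_ne n 0 with rfl | hn
    · simp
    · rw [LSeries.term_of_ne_zero (mul_ne_zero hk hn), LSeries.term_of_ne_zero hn,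
        if_pos (dvd_mul_right _ _), Nat.mul_div_cancel_left _ (Nat.pos_of_ne_zero hk),
        Nat.cast_mul, Complex.natCast_mul_natCast_cpow, Complex.cpow_neg]
      field_simp
  · intro n hn
    rcases eq_or_ne n 0 with rfl | hn0
    · simp
    · rw [LSeries.term_of_ne_zero hn0, if_neg, zero_div]
      rintro ⟨m, rfl⟩
      exact hn ⟨m, rfl⟩

theorem LSer_hasSum (χ : ℕ → ℤ) (hχ : ∀ n, |χ n| ≤ 1) (s : ℂ) (hs : 1 < s.re) :
    LSeriesHasSum (fun n => (χ n : ℂ)) s (LSer χ s) := by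
  have hsum : LSeriesSummable (fun n => (χ n : ℂ)) s := by
    apply LSeriesSummable_of_bounded_of_one_lt_re (m := 1) _ hs
    intro n _
    rw [Complex.norm_intCast]
    exact_mod_cast hχ n
  have : LSer χ s = LSeries (fun n => (χ n : ℂ)) s := by
    rw [LSeries, LSer, Summable.tsum_eq_zero_add hsum]
    simp only [LSeries.term_zero, zero_add]
    apply tsum_congr
    intro n
    rw [LSeries.term_of_ne_zero (Nat.succ_ne_zero n)]
    push_cast
    rfl
  rw [this]
  exact hsum.LSeriesHasSum

theorem acoef_hasSum (s : ℂ) (hs : 1 < s.re) :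
    LSeriesHasSum (fun n => (acoef n : ℂ)) s (LSer chiNeg3 s * LSer chi5 s) := by
  have h3 := LSer_hasSum chiNeg3 (by intro n; unfold chiNeg3; split_ifs <;> simp) s hs
  have h5 := LSer_hasSum chi5 (by intro n; unfold chi5; split_ifs <;> simp) s hs
  convert h3.convolution h5 using 1
  funext n
  rw [LSeries.convolution_def, acoef]
  beta_reduce
  rw [Nat.sum_divisorsAntidiagonal (fun i j => ((chiNeg3 i : ℂ) * (chi5 j : ℂ)))]
  push_cast
  rfl

/-- Lemma 3.3 (4): for `Re(s) > 1`,
`∑'_{(m,k)≠0} [ (m²+15k²)^{-s} − (3m²+5k²)^{-s} ] = 2(1 + 2^{1−2s} + 2^{1−s}) L(χ₋₃, s) L(χ₅, s)`. -/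
theorem lattice_sum_diff_eq_two_factor_L3_L5 (s : ℂ) (hs : 1 < s.re) :
    (∑' p : {p : ℤ × ℤ // p ≠ 0},
        (1 / (((p.1.1 : ℂ) ^ 2 + 15 * (p.1.2 : ℂ) ^ 2) ^ s) -
          1 / ((3 * (p.1.1 : ℂ) ^ 2 + 5 * (p.1.2 : ℂ) ^ 2) ^ s))) =
      2 * (1 + (2 : ℂ) ^ (1 - 2 * s) + (2 : ℂ) ^ (1 - s)) * LSer chiNeg3 s *
        LSer chi5 s := by
  have f1 := form_hasSum 1 15 (by norm_num) (by norm_num) s hs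
  have f2 := form_hasSum 3 5 (by norm_num) (by norm_num) s hs
  have t1 := form_subtype 1 15 s hs
  have t2 := form_subtype 3 5 s hs
  have m1 := (form_pos 1 15 (by norm_num) (by norm_num) s hs).subtype {v : ℤ × ℤ | v ≠ 0}
  have m2 := (form_pos 3 5 (by norm_num) (by norm_num) s hs).subtype {v : ℤ × ℤ | v ≠ 0}
  have hL := Summable.tsum_sub m1 m2
  have hF := LSeriesHasSum.sub f1 f2
  rw [← t1, ← t2] at hF
  have hA := acoef_hasSum s hs
  have hA2 := shift_hasSum 2 (by norm_num) _ s _ hA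
  have hA4 := shift_hasSum 4 (by norm_num) _ s _ hA
  have hR := ((hA.add (hA2.smul 2)).add (hA4.smul 2)).smul 2
  have heq := HasSum.unique hF (by
    refine (LSeriesHasSum_congr s _ ?_).2 hR
    intro n hn
    have h : ((FF n : ℤ) : ℂ) = _ := congrArg (Int.cast : ℤ → ℂ) (FF_eq n hn)
    rw [FF] at h
    push_cast at h
    simp only [Pi.sub_apply, Pi.add_apply, Pi.smul_apply, smul_eq_mul]
    push_cast
    exact h)
  have p1 : (2 : ℂ) ^ (1 - 2 * s) = 2 * (4 : ℂ) ^ (-s) := by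
    rw [sub_eq_add_neg, Complex.cpow_add _ _ two_ne_zero, Complex.cpow_one]
    congr 1
    have : -(2 * s) = ((2 : ℕ) : ℂ) * (-s) := by push_cast; ring
    have h4 := Complex.natCast_mul_natCast_cpow 2 2 (-s)
    rw [this, Complex.cpow_nat_mul, sq]
    norm_num at h4 ⊢
    exact h4.symm
  have p2 : (2 : ℂ) ^ (1 - s) = 2 * (2 : ℂ) ^ (-s) := by
    rw [sub_eq_add_neg, Complex.cpow_add _ _ two_ne_zero, Complex.cpow_one]
  rw [p1, p2]
  push_cast at heq hL
  simp only [one_mul] at heq hL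
  refine Eq.trans ?_ (heq.trans ?_)
  · exact hL
  · ring
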